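/- (Lower bound for the caloric B^{-1}_{∞,∞} norm of anisotropically scaled data, case α = β.) Let 0 ≤ α < 1 and let f, g, h be Schwartz functions on ℝ. For ε > 0 define ψ^ε(x) = f(ε^α x₁) g(ε^α x₂) h(ε x₃) on ℝ³, and let (f ⊗ g)(x₁, x₂) = f(x₁) g(x₂) on ℝ². Then there exists ε₀ > 0 such that for all 0 < ε < ε₀, sup_{t>0} t^{1/2} ‖H₃(t) ψ^ε‖_{L^∞(ℝ³)} ≥ (1/4) ε^{−α} · ( sup_{t>0} t^{1/2} ‖H₂(t)(f ⊗ g)‖_{L^∞(ℝ²)} ) · ‖h‖_{L^∞(ℝ)}. -/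

import Mathlib

open MeasureTheory

/-- The heat semigroup on `ℝ³`. -/
noncomputable def heat3 (t : ℝ) (φ : EuclideanSpace ℝ (Fin 3) → ℝ)
    (x : EuclideanSpace ℝ (Fin 3)) : ℝ :=
  ∫ y : EuclideanSpace ℝ (Fin 3),
    (4 * Real.pi * t) ^ (-(3 : ℝ) / 2) * Real.exp (-‖x - y‖ ^ 2 / (4 * t)) * φ y

/-- The heat semigroup on `ℝ²`. -/
noncomputable def heat2 (t : ℝ) (φ : EuclideanSpace ℝ (Fin 2) → ℝ)
    (x : EuclideanSpace ℝ (Fin 2)) : ℝ :=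
  ∫ y : EuclideanSpace ℝ (Fin 2),
    (4 * Real.pi * t) ^ (-(2 : ℝ) / 2) * Real.exp (-‖x - y‖ ^ 2 / (4 * t)) * φ y

/-!
Pulling out the dilation by `ε ^ α`, under which the caloric norm is homogeneous of degree `-1`,
turns `ψ^ε` into `φ ⊗ h(δ ·)` with `δ = ε ^ (1 - α) → 0`. The heat semigroup factorizes over
orthogonal products, so at each time `t` the `L^∞` norm of its value at `φ ⊗ h(δ ·)` is at least
`‖H(t) φ‖ ‖H(t) h(δ ·)‖ = ‖H(t) φ‖ ‖H(δ² t) h‖`. Since `H(s) h → h` pointwise as `s → 0`, the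
second factor loses nothing in the limit: `liminf_{δ → 0} ‖φ ⊗ h(δ ·)‖ ≥ ‖φ‖ ‖h‖_∞`, and any
constant below `1`, such as `1 / 4`, is admissible for small `ε`.
-/

open Filter Module Topology
open scoped BoundedContinuousFunction ENNReal

section EssentialSupremum

variable {X Y G : Type*} [MeasurableSpace X] [MeasurableSpace Y]

lemma eLpNorm_comp_of_measurableEmbedding [TopologicalSpace G] [ContinuousENorm G] {μ : Measure X}
    {ν : Measure Y} {e : X → Y} (he : MeasurePreserving e μ ν) (hemb : MeasurableEmbedding e)
    (u : Y → G) (p : ℝ≥0∞) : eLpNorm (fun x ↦ u (e x)) p μ = eLpNorm u p ν := by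
  rw [← he.map_eq, hemb.eLpNorm_map_measure]
  rfl

lemma enorm_le_eLpNorm_top_of_continuous [TopologicalSpace X] [TopologicalSpace G]
    [ContinuousENorm G] {μ : Measure X} [μ.IsOpenPosMeasure] {u : X → G} (hu : Continuous u)
    (x : X) : ‖u x‖ₑ ≤ eLpNorm u ⊤ μ := by
  have hdense : Dense {x | ‖u x‖ₑ ≤ eLpNorm u ⊤ μ} := by
    rw [eLpNorm_exponent_top]
    exact μ.dense_of_ae (enorm_ae_le_eLpNormEssSup u μ)
  have hclosed : IsClosed {x | ‖u x‖ₑ ≤ eLpNorm u ⊤ μ} := isClosed_le hu.enorm continuous_const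
  exact (hclosed.closure_eq ▸ hdense x :)

lemma eLpNorm_top_le_iSup_enorm [ENorm G] (μ : Measure X) (u : X → G) :
    eLpNorm u ⊤ μ ≤ ⨆ x, ‖u x‖ₑ := by
  rw [eLpNorm_exponent_top]
  exact essSup_le_of_ae_le _ (.of_forall fun x ↦ le_iSup (fun x ↦ ‖u x‖ₑ) x)

lemma eLpNorm_top_mul_le_eLpNorm_top_prod [NormedRing G] [NormMulClass G]
    (μ : Measure X) (ν : Measure Y) [SFinite ν] (u : X → G) (v : Y → G) :
    eLpNorm u ⊤ μ * eLpNorm v ⊤ ν ≤ eLpNorm (fun p : X × Y ↦ u p.1 * v p.2) ⊤ (μ.prod ν) := by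
  set N := eLpNorm (fun p : X × Y ↦ u p.1 * v p.2) ⊤ (μ.prod ν) with hN
  have hprod : ∀ᵐ x ∂μ, ∀ᵐ y ∂ν, ‖u x‖ₑ * ‖v y‖ₑ ≤ N := by
    simp_rw [hN, eLpNorm_exponent_top, ← enorm_mul]
    exact Measure.ae_ae_of_ae_prod (enorm_ae_le_eLpNormEssSup _ _)
  have hslice : ∀ᵐ x ∂μ, eLpNorm v ⊤ ν * ‖u x‖ₑ ≤ N := by
    filter_upwards [hprod] with x hx
    rw [mul_comm, eLpNorm_exponent_top, eLpNormEssSup, ← ENNReal.essSup_const_mul]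
    exact essSup_le_of_ae_le _ hx
  rw [mul_comm, eLpNorm_exponent_top (f := u), eLpNormEssSup, ← ENNReal.essSup_const_mul]
  exact essSup_le_of_ae_le _ hslice

lemma eLpNorm_top_comp_smul [TopologicalSpace G] [ContinuousENorm G] {E : Type*}
    [NormedAddCommGroup E] [NormedSpace ℝ E] [MeasurableSpace E] [BorelSpace E]
    [FiniteDimensional ℝ E] (μ : Measure E) [μ.IsAddHaarMeasure] {c : ℝ} (hc : c ≠ 0) (u : E → G) :
    eLpNorm (fun x ↦ u (c • x)) ⊤ μ = eLpNorm u ⊤ μ := by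
  have hscale : ENNReal.ofReal |(c ^ finrank ℝ E)⁻¹| ≠ 0 := by
    rw [ENNReal.ofReal_ne_zero_iff]
    positivity
  calc eLpNorm (fun x ↦ u (c • x)) ⊤ μ
      = eLpNorm u ⊤ (μ.map (c • ·)) :=
        ((measurableEmbedding_const_smul₀ hc).eLpNorm_map_measure).symm
    _ = eLpNorm u ⊤ μ := by
        rw [Measure.map_addHaar_smul μ hc, eLpNorm_smul_measure_of_ne_zero hscale]
        simp

end EssentialSupremum

section HeatKernel

variable {E F : Type*} [NormedAddCommGroup E] [InnerProductSpace ℝ E]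
  [NormedAddCommGroup F] [InnerProductSpace ℝ F]

/-- The Gauss–Weierstrass kernel on a Euclidean space, the fundamental solution of `∂ₜu = Δu`. -/
noncomputable def heatKernel (t : ℝ) (x : E) : ℝ :=
  (4 * Real.pi * t) ^ (-(finrank ℝ E : ℝ) / 2) * Real.exp (-‖x‖ ^ 2 / (4 * t))

@[fun_prop]
lemma continuous_heatKernel (t : ℝ) : Continuous (heatKernel t : E → ℝ) := by
  unfold heatKernel
  fun_prop

lemma heatKernel_nonneg {t : ℝ} (ht : 0 < t) (x : E) : 0 ≤ heatKernel t x := by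
  unfold heatKernel
  positivity

lemma heatKernel_le {t : ℝ} (ht : 0 < t) (x : E) :
    heatKernel t x ≤ (4 * Real.pi * t) ^ (-(finrank ℝ E : ℝ) / 2) := by
  have hexp : -‖x‖ ^ 2 / (4 * t) ≤ 0 := div_nonpos_of_nonpos_of_nonneg (by simp) (by positivity)
  exact mul_le_of_le_one_right (by positivity) (Real.exp_le_one_iff.2 hexp)

lemma heatKernel_comp_linearIsometryEquiv (e : E ≃ₗᵢ[ℝ] F) (t : ℝ) (x : E) :
    heatKernel t (e x) = heatKernel t x := by
  rw [heatKernel, heatKernel, e.norm_map, e.toLinearEquiv.finrank_eq]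

lemma heatKernel_withLp_prod [FiniteDimensional ℝ E] [FiniteDimensional ℝ F]
    {t : ℝ} (ht : 0 < t) (z : WithLp 2 (E × F)) :
    heatKernel t z = heatKernel t z.fst * heatKernel t z.snd := by
  have hdim : finrank ℝ (WithLp 2 (E × F)) = finrank ℝ E + finrank ℝ F := by
    rw [(WithLp.linearEquiv 2 ℝ (E × F)).finrank_eq, finrank_prod]
  have hpos : 0 < 4 * Real.pi * t := by positivity
  simp only [heatKernel]
  rw [hdim, WithLp.prod_norm_sq_eq_of_L2, Nat.cast_add, neg_add, neg_add, add_div, add_div,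
    Real.rpow_add hpos, Real.exp_add]
  ring

lemma heatKernel_smul {c : ℝ} (hc : 0 < c) {t : ℝ} (ht : 0 < t) (x : E) :
    heatKernel (c ^ 2 * t) (c • x) = (c ^ finrank ℝ E)⁻¹ * heatKernel t x := by
  have hpow : (4 * Real.pi * (c ^ 2 * t)) ^ (-(finrank ℝ E : ℝ) / 2) =
      (c ^ finrank ℝ E)⁻¹ * (4 * Real.pi * t) ^ (-(finrank ℝ E : ℝ) / 2) := by
    rw [show 4 * Real.pi * (c ^ 2 * t) = c ^ 2 * (4 * Real.pi * t) by ring,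
      Real.mul_rpow (by positivity) (by positivity), ← Real.rpow_natCast c 2,
      ← Real.rpow_mul hc.le, ← Real.rpow_natCast, ← Real.rpow_neg hc.le]
    congr 2
    push_cast
    ring
  have hexp : -‖c • x‖ ^ 2 / (4 * (c ^ 2 * t)) = -‖x‖ ^ 2 / (4 * t) := by
    rw [norm_smul, mul_pow, Real.norm_eq_abs, sq_abs]
    field_simp
  rw [heatKernel, heatKernel, hpow, hexp, mul_assoc]

lemma sqrt_mul_rpow_neg_finrank_le_one [FiniteDimensional ℝ E] [Nontrivial E] {t : ℝ} (ht : 1 ≤ t) :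
    √t * (4 * Real.pi * t) ^ (-(finrank ℝ E : ℝ) / 2) ≤ 1 := by
  have hdim : (1 : ℝ) ≤ finrank ℝ E := by exact_mod_cast finrank_pos (R := ℝ) (M := E)
  have ht_le : t ≤ 4 * Real.pi * t := by nlinarith [Real.pi_gt_three]
  calc √t * (4 * Real.pi * t) ^ (-(finrank ℝ E : ℝ) / 2)
      ≤ (4 * Real.pi * t) ^ (1 / 2 : ℝ) * (4 * Real.pi * t) ^ (-(finrank ℝ E : ℝ) / 2) := by
        rw [Real.sqrt_eq_rpow]
        gcongr
    _ = (4 * Real.pi * t) ^ ((1 - finrank ℝ E : ℝ) / 2) := by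
        rw [← Real.rpow_add (by positivity)]
        ring_nf
    _ ≤ 1 := Real.rpow_le_one_of_one_le_of_nonpos (ht.trans ht_le) (by linarith)

variable [FiniteDimensional ℝ E] [MeasurableSpace E] [BorelSpace E]

lemma integral_heatKernel {t : ℝ} (ht : 0 < t) : ∫ x : E, heatKernel t x = 1 := by
  have hgauss := GaussianFourier.integral_rexp_neg_mul_sq_norm (V := E)
    (show 0 < (4 * t)⁻¹ by positivity)
  have hkernel (x : E) : heatKernel t x =
      (4 * Real.pi * t) ^ (-(finrank ℝ E : ℝ) / 2) * Real.exp (-(4 * t)⁻¹ * ‖x‖ ^ 2) := by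
    rw [heatKernel, div_eq_inv_mul (-‖x‖ ^ 2), mul_neg, neg_mul]
  simp_rw [hkernel]
  rw [integral_const_mul, hgauss, show Real.pi / (4 * t)⁻¹ = 4 * Real.pi * t by field_simp,
    ← Real.rpow_add (by positivity), neg_div, neg_add_cancel, Real.rpow_zero]

lemma integrable_heatKernel {t : ℝ} (ht : 0 < t) : Integrable (heatKernel t : E → ℝ) :=
  .of_integral_ne_zero (by simp [integral_heatKernel ht])

lemma lintegral_enorm_heatKernel {t : ℝ} (ht : 0 < t) : ∫⁻ x : E, ‖heatKernel t x‖ₑ = 1 := by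
  simp_rw [Real.enorm_of_nonneg (heatKernel_nonneg ht _)]
  rw [← ofReal_integral_eq_lintegral_ofReal (integrable_heatKernel ht)
    (.of_forall (heatKernel_nonneg ht)), integral_heatKernel ht, ENNReal.ofReal_one]

end HeatKernel

section HeatSemigroup

variable {E F : Type*}
  [NormedAddCommGroup E] [InnerProductSpace ℝ E] [FiniteDimensional ℝ E]
  [MeasurableSpace E] [BorelSpace E]
  [NormedAddCommGroup F] [InnerProductSpace ℝ F] [FiniteDimensional ℝ F]
  [MeasurableSpace F] [BorelSpace F]

/-- The heat semigroup `H(t)` on a Euclidean space: convolution with the heat kernel. As a Bochner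
integral it takes the value `0` wherever the integrand is not integrable. -/
noncomputable def heatSemigroup (t : ℝ) (φ : E → ℝ) (x : E) : ℝ :=
  ∫ y, heatKernel t (x - y) * φ y

lemma heatSemigroup_comp_linearIsometryEquiv (e : E ≃ₗᵢ[ℝ] F) (t : ℝ) (φ : F → ℝ) (x : E) :
    heatSemigroup t (fun y ↦ φ (e y)) x = heatSemigroup t φ (e x) := by
  have hcomp := e.measurePreserving.integral_comp e.toHomeomorph.measurableEmbedding
    fun y ↦ heatKernel t (e x - y) * φ y
  simpa only [heatSemigroup, ← map_sub, heatKernel_comp_linearIsometryEquiv] using hcomp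

lemma heatSemigroup_comp_smul {c : ℝ} (hc : 0 < c) {t : ℝ} (ht : 0 < t) (φ : E → ℝ) (x : E) :
    heatSemigroup t (fun y ↦ φ (c • y)) x = heatSemigroup (c ^ 2 * t) φ (c • x) := by
  have hcomp := Measure.integral_comp_smul volume
    (fun y : E ↦ heatKernel (c ^ 2 * t) (c • x - y) * φ y) c
  simp_rw [← smul_sub, heatKernel_smul hc ht, mul_assoc, integral_const_mul, smul_eq_mul] at hcomp
  rw [abs_of_pos (by positivity)] at hcomp
  exact mul_left_cancel₀ (by positivity) hcomp

lemma heatSemigroup_withLp_prod {t : ℝ} (ht : 0 < t) (φ : E → ℝ) (h : F → ℝ)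
    (x : WithLp 2 (E × F)) :
    heatSemigroup t (fun z : WithLp 2 (E × F) ↦ φ z.fst * h z.snd) x =
      heatSemigroup t φ x.fst * heatSemigroup t h x.snd := by
  have hfubini := integral_prod_mul (μ := (volume : Measure E)) (ν := (volume : Measure F))
    (fun y ↦ heatKernel t (x.fst - y) * φ y) fun y ↦ heatKernel t (x.snd - y) * h y
  rw [heatSemigroup, heatSemigroup, heatSemigroup, ← hfubini, ← Measure.volume_eq_prod,
    ← (WithLp.volume_preserving_ofLp E F).integral_comp
      (WithLp.homeomorphProd 2 E F).measurableEmbedding]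
  simp_rw [heatKernel_withLp_prod ht]
  congr 1 with z
  exact mul_mul_mul_comm _ _ _ _

lemma heatSemigroup_eq_integral_sub (t : ℝ) (φ : E → ℝ) (x : E) :
    heatSemigroup t φ x = ∫ u, heatKernel t u * φ (x - u) := by
  rw [← integral_sub_left_eq_self _ volume x]
  simp [heatSemigroup]

lemma heatSemigroup_eq_integral_sub_sqrt_smul {t : ℝ} (ht : 0 < t) (φ : E → ℝ) (x : E) :
    heatSemigroup t φ x = ∫ u, heatKernel 1 u * φ (x - √t • u) := by
  have hsqrt : √t ≠ 0 := (Real.sqrt_pos.2 ht).ne'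
  have hscale := heatSemigroup_comp_smul (Real.sqrt_pos.2 ht) one_pos φ ((√t)⁻¹ • x)
  rw [mul_one, Real.sq_sqrt ht.le, smul_inv_smul₀ hsqrt, heatSemigroup_eq_integral_sub] at hscale
  simp_rw [← hscale, smul_sub, smul_inv_smul₀ hsqrt]

lemma continuous_integral_heatKernel_mul_sub_smul (h : E →ᵇ ℝ) :
    Continuous fun p : ℝ × E ↦ ∫ u, heatKernel 1 u * h (p.2 - p.1 • u) := by
  refine continuous_of_dominated (bound := fun u ↦ heatKernel 1 u * ‖h‖) ?_ ?_ ?_ ?_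
  · exact fun p ↦ (by fun_prop : Continuous _).aestronglyMeasurable
  · refine fun p ↦ .of_forall fun u ↦ ?_
    rw [norm_mul, Real.norm_of_nonneg (heatKernel_nonneg one_pos u)]
    exact mul_le_mul_of_nonneg_left (h.norm_coe_le_norm _) (heatKernel_nonneg one_pos u)
  · exact (integrable_heatKernel one_pos).mul_const _
  · exact .of_forall fun u ↦ by fun_prop

lemma continuous_heatSemigroup {t : ℝ} (ht : 0 < t) (h : E →ᵇ ℝ) :
    Continuous (heatSemigroup t h) := by
  rw [funext (heatSemigroup_eq_integral_sub_sqrt_smul ht h)]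
  exact (continuous_integral_heatKernel_mul_sub_smul h).comp (Continuous.prodMk_right √t)

lemma tendsto_heatSemigroup_nhdsGT_zero (h : E →ᵇ ℝ) (x : E) :
    Tendsto (fun t ↦ heatSemigroup t h x) (𝓝[>] 0) (𝓝 (h x)) := by
  have hcont : Continuous fun t : ℝ ↦ ∫ u, heatKernel 1 u * h (x - √t • u) :=
    (continuous_integral_heatKernel_mul_sub_smul h).comp
      (by fun_prop : Continuous fun t : ℝ ↦ (√t, x))
  have hlim := (hcont.tendsto 0).mono_left (nhdsWithin_le_nhds (s := Set.Ioi 0))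
  simp only [Real.sqrt_zero, zero_smul, sub_zero, integral_mul_const, integral_heatKernel one_pos,
    one_mul] at hlim
  refine hlim.congr' ?_
  filter_upwards [self_mem_nhdsWithin] with t ht
  exact (heatSemigroup_eq_integral_sub_sqrt_smul ht h x).symm

end HeatSemigroup

section CaloricNorm

variable {E F : Type*}
  [NormedAddCommGroup E] [InnerProductSpace ℝ E] [FiniteDimensional ℝ E]
  [MeasurableSpace E] [BorelSpace E]
  [NormedAddCommGroup F] [InnerProductSpace ℝ F] [FiniteDimensional ℝ F]
  [MeasurableSpace F] [BorelSpace F]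

/-- The caloric form `sup_{t > 0} t^{1/2} ‖H(t) φ‖_{L^∞}` of the homogeneous Besov norm
`Ḃ^{-1}_{∞,∞}`, valued in `ℝ≥0∞` so that it is defined for every function. -/
noncomputable def caloricNorm (φ : E → ℝ) : ℝ≥0∞ :=
  ⨆ (t : ℝ) (_ : 0 < t), ENNReal.ofReal √t * eLpNorm (heatSemigroup t φ) ⊤ volume

lemma le_caloricNorm {t : ℝ} (ht : 0 < t) (φ : E → ℝ) :
    ENNReal.ofReal √t * eLpNorm (heatSemigroup t φ) ⊤ volume ≤ caloricNorm φ :=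
  le_iSup₂ (f := fun (t : ℝ) (_ : 0 < t) ↦
    ENNReal.ofReal √t * eLpNorm (heatSemigroup t φ) ⊤ volume) t ht

lemma caloricNorm_comp_linearIsometryEquiv (e : E ≃ₗᵢ[ℝ] F) (φ : F → ℝ) :
    caloricNorm (fun x ↦ φ (e x)) = caloricNorm φ := by
  simp_rw [caloricNorm, funext (heatSemigroup_comp_linearIsometryEquiv e _ φ),
    eLpNorm_comp_of_measurableEmbedding e.measurePreserving e.toHomeomorph.measurableEmbedding]

lemma eLpNorm_heatSemigroup_comp_smul {c : ℝ} (hc : 0 < c) {t : ℝ} (ht : 0 < t) (φ : E → ℝ) :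
    eLpNorm (heatSemigroup t fun x ↦ φ (c • x)) ⊤ volume =
      eLpNorm (heatSemigroup (c ^ 2 * t) φ) ⊤ volume := by
  rw [funext (heatSemigroup_comp_smul hc ht φ), eLpNorm_top_comp_smul volume hc.ne']

lemma caloricNorm_comp_smul {c : ℝ} (hc : 0 < c) (φ : E → ℝ) :
    caloricNorm (fun x ↦ φ (c • x)) = ENNReal.ofReal c⁻¹ * caloricNorm φ := by
  have hsqrt (t : ℝ) : √t = c⁻¹ * √(c ^ 2 * t) := by
    rw [Real.sqrt_mul (sq_nonneg c), Real.sqrt_sq hc.le, inv_mul_cancel_left₀ hc.ne']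
  simp_rw [caloricNorm, ENNReal.mul_iSup]
  refine (Equiv.mulLeft₀ (c ^ 2) (by positivity)).iSup_congr fun t ↦ ?_
  refine iSup_congr_Prop (mul_pos_iff_of_pos_left (pow_pos hc 2)) fun ht ↦ ?_
  rw [eLpNorm_heatSemigroup_comp_smul hc ht, hsqrt t, ENNReal.ofReal_mul (inv_nonneg.2 hc.le),
    mul_assoc]
  rfl

lemma eLpNorm_heatSemigroup_le_eLpNorm_one {t : ℝ} (ht : 0 < t) (φ : E → ℝ) :
    eLpNorm (heatSemigroup t φ) ⊤ volume ≤
      ENNReal.ofReal ((4 * Real.pi * t) ^ (-(finrank ℝ E : ℝ) / 2)) * eLpNorm φ 1 volume := by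
  refine (eLpNorm_top_le_iSup_enorm _ _).trans (iSup_le fun x ↦ ?_)
  rw [eLpNorm_one_eq_lintegral_enorm, ← lintegral_const_mul' _ _ ENNReal.ofReal_ne_top]
  refine (enorm_integral_le_lintegral_enorm _).trans (lintegral_mono fun y ↦ ?_)
  rw [enorm_mul, Real.enorm_of_nonneg (heatKernel_nonneg ht _)]
  gcongr
  exact heatKernel_le ht _

lemma eLpNorm_heatSemigroup_le_eLpNorm_top {t : ℝ} (ht : 0 < t) (φ : E → ℝ) :
    eLpNorm (heatSemigroup t φ) ⊤ volume ≤ eLpNorm φ ⊤ volume := by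
  refine (eLpNorm_top_le_iSup_enorm _ _).trans (iSup_le fun x ↦ ?_)
  calc ‖heatSemigroup t φ x‖ₑ
      ≤ ∫⁻ y, ‖heatKernel t (x - y)‖ₑ * ‖φ y‖ₑ := by
        simpa only [heatSemigroup, enorm_mul] using enorm_integral_le_lintegral_enorm
          fun y ↦ heatKernel t (x - y) * φ y
    _ ≤ ∫⁻ y, ‖heatKernel t (x - y)‖ₑ * eLpNorm φ ⊤ volume := by
        rw [eLpNorm_exponent_top]
        refine lintegral_mono_ae ?_
        filter_upwards [enorm_ae_le_eLpNormEssSup φ volume] with y hy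
        gcongr
    _ = eLpNorm φ ⊤ volume := by
        rw [lintegral_mul_const _ (by fun_prop : Continuous _).measurable,
          lintegral_sub_left_eq_self (fun u ↦ ‖heatKernel t u‖ₑ) x,
          lintegral_enorm_heatKernel ht, one_mul]

lemma caloricNorm_le_eLpNorm_add_eLpNorm [Nontrivial E] (φ : E → ℝ) :
    caloricNorm φ ≤ eLpNorm φ 1 volume + eLpNorm φ ⊤ volume := by
  refine iSup₂_le fun t ht ↦ ?_
  rcases le_total 1 t with h1t | ht1
  · refine le_add_right ?_
    calc ENNReal.ofReal √t * eLpNorm (heatSemigroup t φ) ⊤ volume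
        ≤ ENNReal.ofReal √t *
            (ENNReal.ofReal ((4 * Real.pi * t) ^ (-(finrank ℝ E : ℝ) / 2)) *
              eLpNorm φ 1 volume) := by
          gcongr
          exact eLpNorm_heatSemigroup_le_eLpNorm_one ht φ
      _ ≤ eLpNorm φ 1 volume := by
          rw [← mul_assoc, ← ENNReal.ofReal_mul (Real.sqrt_nonneg t)]
          exact mul_le_of_le_one_left' (ENNReal.ofReal_le_one.2
            (sqrt_mul_rpow_neg_finrank_le_one h1t))
  · refine le_add_left ?_
    calc ENNReal.ofReal √t * eLpNorm (heatSemigroup t φ) ⊤ volume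
        ≤ 1 * eLpNorm φ ⊤ volume := by
          gcongr
          · exact ENNReal.ofReal_le_one.2 (Real.sqrt_le_one.2 ht1)
          · exact eLpNorm_heatSemigroup_le_eLpNorm_top ht φ
      _ = eLpNorm φ ⊤ volume := one_mul _

end CaloricNorm

section LowerBound

variable {E F : Type*}
  [NormedAddCommGroup E] [InnerProductSpace ℝ E] [FiniteDimensional ℝ E]
  [MeasurableSpace E] [BorelSpace E]
  [NormedAddCommGroup F] [InnerProductSpace ℝ F] [FiniteDimensional ℝ F]
  [MeasurableSpace F] [BorelSpace F]

lemma eLpNorm_top_le_liminf_heatSemigroup (h : F →ᵇ ℝ) :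
    eLpNorm h ⊤ volume ≤ liminf (fun t ↦ eLpNorm (heatSemigroup t h) ⊤ volume) (𝓝[>] 0) := by
  refine (eLpNorm_top_le_iSup_enorm _ _).trans (iSup_le fun y ↦ ?_)
  rw [← (tendsto_heatSemigroup_nhdsGT_zero h y).enorm.liminf_eq]
  refine liminf_le_liminf ?_
  filter_upwards [self_mem_nhdsWithin] with t ht
  exact enorm_le_eLpNorm_top_of_continuous (continuous_heatSemigroup ht h) y

lemma eLpNorm_top_le_liminf_heatSemigroup_comp_smul {t : ℝ} (ht : 0 < t) (h : F →ᵇ ℝ) :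
    eLpNorm h ⊤ volume ≤
      liminf (fun δ : ℝ ↦ eLpNorm (heatSemigroup t fun y ↦ h (δ • y)) ⊤ volume) (𝓝[>] 0) := by
  have htime : Tendsto (fun δ : ℝ ↦ δ ^ 2 * t) (𝓝[>] 0) (𝓝[>] 0) := by
    refine tendsto_nhdsWithin_iff.2 ⟨?_, ?_⟩
    · have hcont : Continuous fun δ : ℝ ↦ δ ^ 2 * t := by fun_prop
      exact (hcont.tendsto' 0 0 (by simp)).mono_left nhdsWithin_le_nhds
    · filter_upwards [self_mem_nhdsWithin] with δ (hδ : 0 < δ)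
      exact mul_pos (pow_pos hδ 2) ht
  calc eLpNorm h ⊤ volume
      ≤ liminf (fun s ↦ eLpNorm (heatSemigroup s h) ⊤ volume) (𝓝[>] 0) :=
        eLpNorm_top_le_liminf_heatSemigroup h
    _ ≤ liminf (fun δ : ℝ ↦ eLpNorm (heatSemigroup (δ ^ 2 * t) h) ⊤ volume) (𝓝[>] 0) :=
        htime.liminf_le_liminf_comp
    _ = liminf (fun δ : ℝ ↦ eLpNorm (heatSemigroup t fun y ↦ h (δ • y)) ⊤ volume) (𝓝[>] 0) := by
        refine liminf_congr ?_
        filter_upwards [self_mem_nhdsWithin] with δ hδ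
        exact (eLpNorm_heatSemigroup_comp_smul hδ ht h).symm

lemma eLpNorm_heatSemigroup_mul_le_withLp_prod {t : ℝ} (ht : 0 < t) (φ : E → ℝ) (h : F → ℝ) :
    eLpNorm (heatSemigroup t φ) ⊤ volume * eLpNorm (heatSemigroup t h) ⊤ volume ≤
      eLpNorm (heatSemigroup t fun z : WithLp 2 (E × F) ↦ φ z.fst * h z.snd) ⊤ volume := by
  rw [funext (heatSemigroup_withLp_prod ht φ h)]
  exact (eLpNorm_top_mul_le_eLpNorm_top_prod volume volume _ _).trans_eq
    (eLpNorm_comp_of_measurableEmbedding (WithLp.volume_preserving_ofLp E F)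
      (WithLp.homeomorphProd 2 E F).measurableEmbedding _ _).symm

theorem caloricNorm_mul_eLpNorm_top_le_liminf (φ : E → ℝ) (h : F →ᵇ ℝ) :
    caloricNorm φ * eLpNorm h ⊤ volume ≤
      liminf (fun δ : ℝ ↦ caloricNorm fun z : WithLp 2 (E × F) ↦ φ z.fst * h (δ • z.snd))
        (𝓝[>] 0) := by
  simp_rw [caloricNorm.eq_def φ, ENNReal.iSup_mul]
  refine iSup₂_le fun t ht ↦ ?_
  set A := ENNReal.ofReal √t * eLpNorm (heatSemigroup t φ) ⊤ volume with hA
  calc A * eLpNorm h ⊤ volume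
      ≤ liminf (fun _ : ℝ ↦ A) (𝓝[>] 0) * liminf
          (fun δ : ℝ ↦ eLpNorm (heatSemigroup t fun y ↦ h (δ • y)) ⊤ volume) (𝓝[>] 0) := by
        rw [liminf_const]
        gcongr
        exact eLpNorm_top_le_liminf_heatSemigroup_comp_smul ht h
    _ ≤ liminf (fun δ : ℝ ↦ A * eLpNorm (heatSemigroup t fun y ↦ h (δ • y)) ⊤ volume) (𝓝[>] 0) :=
        ENNReal.le_liminf_mul
    _ ≤ _ := by
        refine liminf_le_liminf (.of_forall fun δ ↦ ?_)
        rw [hA, mul_assoc]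
        refine le_trans ?_ (le_caloricNorm ht _)
        gcongr
        exact eLpNorm_heatSemigroup_mul_le_withLp_prod ht φ fun y ↦ h (δ • y)

lemma caloricNorm_anisotropic (α : ℝ) {ε : ℝ} (hε : 0 < ε) (φ : E → ℝ) (h : F → ℝ) :
    caloricNorm (fun z : WithLp 2 (E × F) ↦ φ (ε ^ α • z.fst) * h (ε • z.snd)) =
      ENNReal.ofReal (ε ^ (-α)) *
        caloricNorm (fun z : WithLp 2 (E × F) ↦ φ z.fst * h (ε ^ (1 - α) • z.snd)) := by
  rw [Real.rpow_neg hε.le, ← caloricNorm_comp_smul (Real.rpow_pos_of_pos hε α)]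
  simp_rw [WithLp.smul_fst, WithLp.smul_snd, smul_smul, ← Real.rpow_add hε, sub_add_cancel,
    Real.rpow_one]

lemma tendsto_rpow_nhdsGT_zero {r : ℝ} (hr : 0 < r) :
    Tendsto (fun ε : ℝ ↦ ε ^ r) (𝓝[>] 0) (𝓝[>] 0) := by
  refine tendsto_nhdsWithin_iff.2 ⟨?_, ?_⟩
  · exact ((Real.continuous_rpow_const hr.le).tendsto' 0 0
      (Real.zero_rpow hr.ne')).mono_left nhdsWithin_le_nhds
  · filter_upwards [self_mem_nhdsWithin] with ε hε
    exact Real.rpow_pos_of_pos hε r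

theorem caloric_besov_lower_bound_of_eq_general {α θ : ℝ} (hα : α < 1) (hθ : θ < 1)
    {φ : E → ℝ} (hφ : caloricNorm φ ≠ ⊤) (h : F →ᵇ ℝ) :
    ∀ᶠ ε : ℝ in 𝓝[>] 0,
      ENNReal.ofReal (θ * ε ^ (-α)) * caloricNorm φ * eLpNorm h ⊤ volume ≤
        caloricNorm fun z : WithLp 2 (E × F) ↦ φ (ε ^ α • z.fst) * h (ε • z.snd) := by
  set P := caloricNorm φ * eLpNorm h ⊤ volume with hP
  have hP_top : P ≠ ⊤ := by
    have hh : MemLp h ⊤ (volume : Measure F) :=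
      memLp_top_of_bound h.continuous.aestronglyMeasurable ‖h‖ (.of_forall h.norm_coe_le_norm)
    exact ENNReal.mul_ne_top hφ hh.eLpNorm_ne_top
  have hlimit : ∀ᶠ δ : ℝ in 𝓝[>] 0, ENNReal.ofReal θ * P ≤
      caloricNorm fun z : WithLp 2 (E × F) ↦ φ z.fst * h (δ • z.snd) := by
    rcases eq_or_ne P 0 with hP0 | hP0
    · simp [hP0]
    have hlt : ENNReal.ofReal θ * P < P := by
      simpa using ENNReal.mul_lt_mul_left hP0 hP_top (ENNReal.ofReal_lt_one.2 hθ)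
    exact (eventually_lt_of_lt_liminf
      (hlt.trans_le (caloricNorm_mul_eLpNorm_top_le_liminf φ h))).mono fun _ ↦ le_of_lt
  filter_upwards [(tendsto_rpow_nhdsGT_zero (sub_pos.2 hα)).eventually hlimit,
    self_mem_nhdsWithin] with ε hbound (hε : 0 < ε)
  rw [caloricNorm_anisotropic α hε φ h, mul_comm θ, ENNReal.ofReal_mul (by positivity), mul_assoc,
    mul_assoc, ← hP]
  gcongr

end LowerBound

section EuclideanCoordinates

lemma caloricNorm_prod_ne_top {ι : Type*} [Fintype ι] [Nonempty ι] (f : ι → ℝ →ᵇ ℝ)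
    (hf : ∀ i, Integrable (f i)) :
    caloricNorm (fun y : EuclideanSpace ℝ ι ↦ ∏ i, f i (y i)) ≠ ⊤ := by
  have hint : Integrable fun y : EuclideanSpace ℝ ι ↦ ∏ i, f i (y i) :=
    (PiLp.volume_preserving_ofLp ι).integrable_comp_of_integrable (.fintype_prod hf)
  have hbdd (y : EuclideanSpace ℝ ι) : ‖∏ i, f i (y i)‖ ≤ ∏ i, ‖f i‖ := by
    rw [norm_prod]
    exact Finset.prod_le_prod (fun _ _ ↦ norm_nonneg _) fun i _ ↦ (f i).norm_coe_le_norm _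
  have htop := memLp_top_of_bound hint.aestronglyMeasurable _ (.of_forall hbdd)
  exact ne_top_of_le_ne_top
    (ENNReal.add_ne_top.2 ⟨(memLp_one_iff_integrable.2 hint).eLpNorm_ne_top, htop.eLpNorm_ne_top⟩)
    (caloricNorm_le_eLpNorm_add_eLpNorm _)

/-- The orthogonal splitting `ℝⁿ⁺¹ ≃ ℝⁿ × ℝ` that separates the last coordinate. -/
noncomputable def euclideanSpaceSuccEquivProd (n : ℕ) :
    EuclideanSpace ℝ (Fin (n + 1)) ≃ₗᵢ[ℝ] WithLp 2 (EuclideanSpace ℝ (Fin n) × ℝ) where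
  toFun x := WithLp.toLp 2 (WithLp.toLp 2 (Fin.init x), x (Fin.last n))
  invFun z := WithLp.toLp 2 (Fin.snoc z.fst z.snd)
  map_add' _ _ := rfl
  map_smul' _ _ := rfl
  left_inv x := by simp
  right_inv z := by
    simp only [Fin.init_snoc, Fin.snoc_last]
    rfl
  norm_map' x := by
    rw [← sq_eq_sq₀ (norm_nonneg _) (norm_nonneg _), WithLp.prod_norm_sq_eq_of_L2,
      EuclideanSpace.norm_sq_eq, EuclideanSpace.norm_sq_eq, Fin.sum_univ_castSucc]
    simp_rw [Real.norm_eq_abs, sq_abs]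
    rfl

lemma iSup_heat2_eq_caloricNorm (φ : EuclideanSpace ℝ (Fin 2) → ℝ) :
    (⨆ (t : ℝ) (_ : 0 < t), ENNReal.ofReal (t ^ ((1 : ℝ) / 2)) * eLpNorm (heat2 t φ) ⊤ volume) =
      caloricNorm φ := by
  have hheat (t : ℝ) : heat2 t φ = heatSemigroup t φ := by
    ext x
    simp [heat2, heatSemigroup, heatKernel]
  simp_rw [caloricNorm, Real.sqrt_eq_rpow, hheat]

lemma iSup_heat3_eq_caloricNorm (φ : EuclideanSpace ℝ (Fin 3) → ℝ) :
    (⨆ (t : ℝ) (_ : 0 < t), ENNReal.ofReal (t ^ ((1 : ℝ) / 2)) * eLpNorm (heat3 t φ) ⊤ volume) =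
      caloricNorm φ := by
  have hheat (t : ℝ) : heat3 t φ = heatSemigroup t φ := by
    ext x
    simp [heat3, heatSemigroup, heatKernel]
  simp_rw [caloricNorm, Real.sqrt_eq_rpow, hheat]

end EuclideanCoordinates

/-- Lower bound for the caloric `Ḃ^{-1}_{∞,∞}` norm of anisotropically scaled data
(case `α = β`): for `ψ^ε(x) = f(ε^α x₁) g(ε^α x₂) h(ε x₃)` and `ε` small enough,
`sup_{t>0} t^{1/2} ‖H₃(t)ψ^ε‖_{L^∞} ≥ (1/4) ε^{−α} (sup_{t>0} t^{1/2} ‖H₂(t)(f⊗g)‖_{L^∞})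
‖h‖_{L^∞}`. -/
theorem caloric_besov_lower_bound_of_eq (α : ℝ) (hα0 : 0 ≤ α) (hα1 : α < 1)
    (f g h : SchwartzMap ℝ ℝ) :
    ∃ ε₀ > 0, ∀ ε : ℝ, 0 < ε → ε < ε₀ →
      ENNReal.ofReal ((1 / 4 : ℝ) * ε ^ (-α)) *
          (⨆ (t : ℝ) (_ : 0 < t),
            ENNReal.ofReal (t ^ ((1 : ℝ) / 2)) *
              eLpNorm
                (heat2 t (fun y : EuclideanSpace ℝ (Fin 2) => f (y 0) * g (y 1))) ⊤
                volume) *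
          eLpNorm (⇑h) ⊤ volume ≤
        ⨆ (t : ℝ) (_ : 0 < t),
          ENNReal.ofReal (t ^ ((1 : ℝ) / 2)) *
            eLpNorm
              (heat3 t (fun z => f (ε ^ α * z 0) * g (ε ^ α * z 1) * h (ε * z 2))) ⊤
              volume := by
  have hfg : caloricNorm (fun y : EuclideanSpace ℝ (Fin 2) ↦ f (y 0) * g (y 1)) ≠ ⊤ := by
    simpa using caloricNorm_prod_ne_top
      ![f.toBoundedContinuousFunction, g.toBoundedContinuousFunction]
      (Fin.forall_fin_two.2 ⟨f.integrable, g.integrable⟩)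
  obtain ⟨ε₀, hε₀, hbound⟩ := mem_nhdsGT_iff_exists_Ioo_subset.1
    (caloric_besov_lower_bound_of_eq_general hα1 (by norm_num : (1 / 4 : ℝ) < 1) hfg
      h.toBoundedContinuousFunction)
  refine ⟨ε₀, hε₀, fun ε hε hε_lt ↦ ?_⟩
  rw [iSup_heat2_eq_caloricNorm, iSup_heat3_eq_caloricNorm]
  refine (hbound ⟨hε, hε_lt⟩).trans_eq ?_
  rw [← caloricNorm_comp_linearIsometryEquiv (euclideanSpaceSuccEquivProd 2)]
  rfl
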